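/- There exists a constant C > 0 such that for every E ∈ (0, 4/25), ∫₀^{√(1 - √(1-4E))} dx / √(2E + x⁴/2 - x²) ≤ C. -/

import Mathlib

theorem hasDerivAt_arcsin_div {a x : ℝ} (hx : x ∈ Set.Ioo 0 a) :
    HasDerivAt (fun y => Real.arcsin (y / a)) (1 / Real.sqrt (a ^ 2 - x ^ 2)) x := by
  obtain ⟨hx0, hxa⟩ := hx
  have ha : 0 < a := hx0.trans hxa
  have hpos : 0 < x / a := div_pos hx0 ha
  have hlt : x / a < 1 := (div_lt_one ha).2 hxa
  have h := (Real.hasDerivAt_arcsin (by linarith) hlt.ne).comp x ((hasDerivAt_id x).div_const a)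
  refine h.congr_deriv ?_
  have hsq : a ^ 2 - x ^ 2 = a ^ 2 * (1 - (x / a) ^ 2) := by field_simp
  rw [hsq, Real.sqrt_mul (sq_nonneg a), Real.sqrt_sq ha.le, one_div_mul_one_div, mul_comm]

theorem intervalIntegrable_one_div_sqrt_sq_sub_sq {a : ℝ} (ha : 0 < a) :
    IntervalIntegrable (fun x => 1 / Real.sqrt (a ^ 2 - x ^ 2)) MeasureTheory.volume 0 a := by
  refine intervalIntegral.intervalIntegrable_deriv_of_nonneg
    (g := fun y => Real.arcsin (y / a)) (by fun_prop) (fun x hx => ?_) fun x _ => by positivity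
  rw [min_eq_left ha.le, max_eq_right ha.le] at hx
  exact hasDerivAt_arcsin_div hx

theorem integral_one_div_sqrt_sq_sub_sq {a : ℝ} (ha : 0 < a) :
    ∫ x in (0 : ℝ)..a, 1 / Real.sqrt (a ^ 2 - x ^ 2) = Real.pi / 2 := by
  rw [intervalIntegral.integral_eq_sub_of_hasDerivAt_of_le ha.le
    (f := fun y => Real.arcsin (y / a)) (by fun_prop) (fun x hx => hasDerivAt_arcsin_div hx)
    (intervalIntegrable_one_div_sqrt_sq_sub_sq ha)]
  simp [div_self ha.ne']

theorem time_integral_uniform_bound :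
    ∃ C > (0 : ℝ), ∀ E : ℝ, 0 < E → E < 4 / 25 →
      (∫ x in (0 : ℝ)..Real.sqrt (1 - Real.sqrt (1 - 4 * E)),
        1 / Real.sqrt (2 * E + x ^ 4 / 2 - x ^ 2)) ≤ C := by
  refine ⟨Real.pi, Real.pi_pos, fun E hE hE' => ?_⟩
  set s := Real.sqrt (1 - 4 * E)
  have hs_sq : s ^ 2 = 1 - 4 * E := Real.sq_sqrt (by linarith)
  have hs_gt : 3 / 5 < s := Real.lt_sqrt_of_sq_lt (by linarith)
  have hs_lt : s < 1 := by nlinarith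
  set a := Real.sqrt (1 - s)
  have ha_sq : a ^ 2 = 1 - s := Real.sq_sqrt (by linarith)
  have ha : 0 < a := Real.sqrt_pos.2 (by linarith)
  have hint := (intervalIntegrable_one_div_sqrt_sq_sub_sq ha).const_mul 2
  have hval : ∫ x in (0 : ℝ)..a, 2 * (1 / Real.sqrt (a ^ 2 - x ^ 2)) = Real.pi := by
    rw [intervalIntegral.integral_const_mul, integral_one_div_sqrt_sq_sub_sq ha]
    ring
  rw [← hval, intervalIntegral.integral_of_le ha.le, intervalIntegral.integral_of_le ha.le,
    MeasureTheory.integral_Ioc_eq_integral_Ioo, MeasureTheory.integral_Ioc_eq_integral_Ioo]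
  refine MeasureTheory.integral_mono_of_nonneg (.of_forall fun x => by positivity)
    (((intervalIntegrable_iff_integrableOn_Ioo_of_le ha.le).1 hint)) ?_
  filter_upwards [MeasureTheory.ae_restrict_mem measurableSet_Ioo] with x hx
  have hx_sq : 0 < a ^ 2 - x ^ 2 := by nlinarith [hx.1, hx.2]
  have hfactor : 2 * E + x ^ 4 / 2 - x ^ 2 = (a ^ 2 - x ^ 2) * (1 + s - x ^ 2) / 2 := by
    rw [ha_sq]
    linear_combination hs_sq / 2
  have hle : (a ^ 2 - x ^ 2) / 2 ^ 2 ≤ 2 * E + x ^ 4 / 2 - x ^ 2 := by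
    rw [hfactor]
    nlinarith
  calc 1 / Real.sqrt (2 * E + x ^ 4 / 2 - x ^ 2)
      ≤ 1 / Real.sqrt ((a ^ 2 - x ^ 2) / 2 ^ 2) :=
        one_div_le_one_div_of_le (Real.sqrt_pos.2 (by positivity)) (Real.sqrt_le_sqrt hle)
    _ = 2 * (1 / Real.sqrt (a ^ 2 - x ^ 2)) := by
        rw [Real.sqrt_div hx_sq.le, Real.sqrt_sq zero_le_two, one_div_div, mul_one_div]
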